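/- Suppose n ≡ 2 (mod 4). Let φ be a bijection of C_n that stabilizes the set {0̄, 1̄}. Then φ is an {n/2, n}-isometry if and only if there exist a permutation π of {1,...,n} and a subset S of X such that for every word c: φ(c) = π(c) if {c, c + 1̄} ∩ S = ∅, and φ(c) = π(c) + 1̄ if {c, c + 1̄} ∩ S ≠ ∅. -/

import Mathlib

theorem hfi_zcases (a : ZMod 2) : a = 0 ∨ a = 1 := by
  revert a; decide

theorem hfi_dist_add_one {n : ℕ} (x y : Fin n → ZMod 2) :
    hammingDist x (y + 1) + hammingDist x y = n := by
  have h := Finset.card_filter_add_card_filter_not (s := (Finset.univ : Finset (Fin n)))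
    (fun i => x i ≠ y i)
  have h2 : (Finset.univ.filter fun i => ¬ (x i ≠ y i)) = Finset.univ.filter
      fun i => x i ≠ (y + 1) i := by
    ext i
    simp only [Finset.mem_filter, Finset.mem_univ, true_and, Pi.add_apply, Pi.one_apply]
    generalize x i = a
    generalize y i = b
    revert a b; decide
  rw [h2] at h
  simp only [Finset.card_univ, Fintype.card_fin] at h
  unfold hammingDist
  omega

theorem hfi_one_add_one {n : ℕ} (x : Fin n → ZMod 2) : x + 1 + 1 = x := by
  funext i
  simp only [Pi.add_apply, Pi.one_apply]
  generalize x i = a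
  revert a; decide

theorem hfi_dist_n {n : ℕ} (x y : Fin n → ZMod 2) (h : hammingDist x y = n) : y = x + 1 := by
  have h1 := hfi_dist_add_one x y
  have h2 : hammingDist x (y + 1) = 0 := by omega
  rw [hammingDist_eq_zero] at h2
  rw [h2, hfi_one_add_one]

/-- common neighbours -/
def hfiN {n : ℕ} (m : ℕ) (x y : Fin n → ZMod 2) : ℕ :=
  (Finset.univ.filter fun z => hammingDist x z = m ∧ hammingDist y z = m).card

theorem hfi_split {n : ℕ} (x y z : Fin n → ZMod 2) :
    let D := Finset.univ.filter fun i => x i ≠ y i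
    hammingDist x z = (D.filter fun i => x i ≠ z i).card + (Dᶜ.filter fun i => x i ≠ z i).card ∧
    hammingDist y z + (D.filter fun i => x i ≠ z i).card =
      D.card + (Dᶜ.filter fun i => x i ≠ z i).card := by
  intro D
  have e1 : hammingDist x z = (D.filter fun i => x i ≠ z i).card
      + (Dᶜ.filter fun i => x i ≠ z i).card := by
    rw [← Finset.card_union_of_disjoint]
    · unfold hammingDist
      congr 1
      ext i
      simp [D]; tauto
    · rw [Finset.disjoint_left]; intro i; simp [D]; tauto
  have e2 : hammingDist y z = (D.filter fun i => ¬ x i ≠ z i).card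
      + (Dᶜ.filter fun i => x i ≠ z i).card := by
    rw [← Finset.card_union_of_disjoint]
    · unfold hammingDist
      congr 1
      ext i
      simp only [D, Finset.mem_union, Finset.mem_filter, Finset.mem_univ, true_and,
        Finset.mem_compl]
      generalize x i = a
      generalize y i = b
      generalize z i = c
      revert a b c; decide
    · rw [Finset.disjoint_left]; intro i; simp [D]; tauto
  have e3 := Finset.card_filter_add_card_filter_not (s := D) (fun i => x i ≠ z i)
  refine ⟨e1, ?_⟩
  omega

/-- build a word from two sets -/
def hfiB {n : ℕ} (x : Fin n → ZMod 2) (A : Finset (Fin n)) : Fin n → ZMod 2 :=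
  fun i => if i ∈ A then x i + 1 else x i

theorem hfiB_ne {n : ℕ} (x : Fin n → ZMod 2) (A : Finset (Fin n)) (i : Fin n) :
    x i ≠ hfiB x A i ↔ i ∈ A := by
  unfold hfiB
  split_ifs with h <;> simp [h]

theorem hfi_count {n m k : ℕ} (hnm : n = 2 * m) (x y : Fin n → ZMod 2)
    (h : hammingDist x y = 2 * k) :
    hfiN m x y = k.centralBinom * (m - k).centralBinom := by
  have hle : hammingDist x y ≤ n := by simpa using hammingDist_le_card_fintype (x := x) (y := y)
  set D := Finset.univ.filter fun i => x i ≠ y i with hD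
  have hDc : D.card = 2 * k := h
  have hDc' : Dᶜ.card = 2 * (m - k) := by
    rw [Finset.card_compl, hDc, Fintype.card_fin]; omega
  rw [Nat.centralBinom, Nat.centralBinom, ← hDc, ← hDc', ← Finset.card_powersetCard,
    ← Finset.card_powersetCard, ← Finset.card_product]
  unfold hfiN
  refine Finset.card_nbij' (fun z => (D.filter fun i => x i ≠ z i, Dᶜ.filter fun i => x i ≠ z i))
    (fun p => hfiB x (p.1 ∪ p.2)) ?_ ?_ ?_ ?_
  · intro z hz
    simp only [Finset.coe_filter, Finset.mem_univ, true_and, Set.mem_ofPred_eq] at hz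
    obtain ⟨e1, e2⟩ := hfi_split x y z
    rw [← hD] at e1 e2
    simp only [Finset.coe_product, Set.mem_prod, Finset.mem_coe, Finset.mem_powersetCard]
    refine ⟨⟨Finset.filter_subset _ _, ?_⟩, ⟨Finset.filter_subset _ _, ?_⟩⟩ <;> omega
  · rintro ⟨A, B⟩ hp
    simp only [Finset.coe_product, Set.mem_prod, Finset.mem_coe, Finset.mem_powersetCard] at hp
    obtain ⟨⟨hA, hA'⟩, hB, hB'⟩ := hp
    obtain ⟨e1, e2⟩ := hfi_split x y (hfiB x (A ∪ B))
    rw [← hD] at e1 e2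
    have f1 : (D.filter fun i => x i ≠ hfiB x (A ∪ B) i) = A := by
      ext i
      have := @hA i
      have := @hB i
      simp only [Finset.mem_filter, hfiB_ne, Finset.mem_union, Finset.mem_compl] at *
      tauto
    have f2 : (Dᶜ.filter fun i => x i ≠ hfiB x (A ∪ B) i) = B := by
      ext i
      have := @hA i
      have := @hB i
      simp only [Finset.mem_filter, hfiB_ne, Finset.mem_union, Finset.mem_compl] at *
      tauto
    rw [f1, f2] at e1 e2
    simp only [Finset.coe_filter, Finset.mem_univ, true_and, Set.mem_ofPred_eq]
    omega
  · intro z hz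
    funext i
    have := hfiB_ne x ((D.filter fun i => x i ≠ z i) ∪ (Dᶜ.filter fun i => x i ≠ z i)) i
    have h2 : i ∈ ((D.filter fun i => x i ≠ z i) ∪ (Dᶜ.filter fun i => x i ≠ z i)) ↔
        x i ≠ z i := by
      simp only [Finset.mem_union, Finset.mem_filter, Finset.mem_compl]; tauto
    rw [h2] at this
    dsimp only
    revert this
    generalize hfiB x _ i = a
    generalize x i = b
    generalize z i = c
    revert a b c; decide
  · rintro ⟨A, B⟩ hp
    simp only [Finset.coe_product, Set.mem_prod, Finset.mem_coe, Finset.mem_powersetCard] at hp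
    obtain ⟨⟨hA, hA'⟩, hB, hB'⟩ := hp
    ext i
    all_goals
      have := @hA i
      have := @hB i
      simp only [Finset.mem_filter, hfiB_ne, Finset.mem_union, Finset.mem_compl] at *
      tauto

theorem hfi_even_of_pos {n m : ℕ} (x y : Fin n → ZMod 2)
    (h : 0 < hfiN m x y) : ∃ k, hammingDist x y = 2 * k := by
  unfold hfiN at h
  rw [Finset.card_pos] at h
  obtain ⟨z, hz⟩ := h
  simp only [Finset.mem_filter, Finset.mem_univ, true_and] at hz
  obtain ⟨e1, e2⟩ := hfi_split x y z
  have : hammingDist x y = (Finset.univ.filter fun i => x i ≠ y i).card := rfl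
  refine ⟨((Finset.univ.filter fun i => x i ≠ y i).filter fun i => x i ≠ z i).card, ?_⟩
  omega

theorem hfi_step {a b : ℕ} (h : a < b) :
    (a + 1).centralBinom * b.centralBinom < a.centralBinom * (b + 1).centralBinom := by
  have h1 := Nat.succ_mul_centralBinom_succ a
  have h2 := Nat.succ_mul_centralBinom_succ b
  have pa := Nat.centralBinom_pos a
  have pb := Nat.centralBinom_pos b
  have hp : 0 < a.centralBinom * b.centralBinom := Nat.mul_pos pa pb
  have : (a + 1) * (b + 1) * ((a + 1).centralBinom * b.centralBinom) <
      (a + 1) * (b + 1) * (a.centralBinom * (b + 1).centralBinom) := by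
    calc _ = ((a + 1) * (a + 1).centralBinom) * ((b + 1) * b.centralBinom) := by ring
      _ = (2 * (2 * a + 1) * (b + 1)) * (a.centralBinom * b.centralBinom) := by rw [h1]; ring
      _ < (2 * (2 * b + 1) * (a + 1)) * (a.centralBinom * b.centralBinom) := by
        apply Nat.mul_lt_mul_of_pos_right _ hp
        nlinarith
      _ = ((b + 1) * (b + 1).centralBinom) * ((a + 1) * a.centralBinom) := by rw [h2]; ring
      _ = _ := by ring
  exact lt_of_mul_lt_mul_left this (Nat.zero_le _)

theorem hfi_lt {q : ℕ} : ∀ d j, j + d + 1 = q →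
    q.centralBinom * (q + 1).centralBinom <
      j.centralBinom * (2 * q + 1 - j).centralBinom := by
  intro d
  induction d with
  | zero =>
    intro j hj
    obtain rfl : q = j + 1 := by omega
    have := hfi_step (a := j) (b := j + 2) (by omega)
    rwa [show 2 * (j + 1) + 1 - j = j + 2 + 1 by omega]
  | succ d ih =>
    intro j hj
    have h1 := ih (j + 1) (by omega)
    have := hfi_step (a := j) (b := 2 * q + 1 - (j + 1)) (by omega)
    rw [show 2 * q + 1 - (j + 1) + 1 = 2 * q + 1 - j by omega] at this
    exact h1.trans this

theorem hfi_min {q j : ℕ} (hj : j ≤ 2 * q + 1)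
    (h : j.centralBinom * (2 * q + 1 - j).centralBinom = q.centralBinom * (q + 1).centralBinom) :
    j = q ∨ j = q + 1 := by
  rcases lt_trichotomy j q with h1 | h1 | h1
  · have := hfi_lt (q := q) (q - j - 1) j (by omega)
    omega
  · exact Or.inl h1
  · by_cases h2 : j = q + 1
    · exact Or.inr h2
    · have := hfi_lt (q := q) (j - q - 2) (2 * q + 1 - j) (by omega)
      rw [show 2 * q + 1 - (2 * q + 1 - j) = j by omega, mul_comm (2 * q + 1 - j).centralBinom] at this
      omega

/-- `N` detects distance `m ± 1`. -/
theorem hfi_E {n q : ℕ} (hnm : n = 2 * (2 * q + 1)) (x y : Fin n → ZMod 2) :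
    hfiN (2 * q + 1) x y = q.centralBinom * (q + 1).centralBinom ↔
      (hammingDist x y = 2 * q ∨ hammingDist x y = 2 * q + 2) := by
  constructor
  · intro h
    have hpos : 0 < hfiN (2 * q + 1) x y := by
      rw [h]; exact Nat.mul_pos (Nat.centralBinom_pos _) (Nat.centralBinom_pos _)
    obtain ⟨k, hk⟩ := hfi_even_of_pos x y hpos
    have hle : hammingDist x y ≤ n := by simpa using hammingDist_le_card_fintype (x := x) (y := y)
    rw [hfi_count hnm x y hk] at h
    have := hfi_min (by omega) h
    omega
  · rintro (h | h)
    · rw [hfi_count hnm x y h, show 2 * q + 1 - q = q + 1 by omega]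
    · rw [hfi_count (k := q + 1) hnm x y (by omega), show 2 * q + 1 - (q + 1) = q by omega,
        mul_comm]

theorem hfi_adj {n q : ℕ} (hnm : n = 2 * (2 * q + 1)) (x y : Fin n → ZMod 2) :
    (hammingDist x y = 1 ∨ hammingDist x y + 1 = n) ↔
      ∀ z, hammingDist y z = 2 * q + 1 →
        (hammingDist x z = 2 * q ∨ hammingDist x z = 2 * q + 2) := by
  constructor
  · intro h z hz
    obtain ⟨e1, e2⟩ := hfi_split x y z
    have hc : hammingDist x y = (Finset.univ.filter fun i => x i ≠ y i).card := rfl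
    have hcc := Finset.card_compl (Finset.univ.filter fun i => x i ≠ y i)
    rw [Fintype.card_fin] at hcc
    have l1 := Finset.card_filter_le (Finset.univ.filter fun i => x i ≠ y i) fun i => x i ≠ z i
    have l2 := Finset.card_filter_le (Finset.univ.filter fun i => x i ≠ y i)ᶜ fun i => x i ≠ z i
    omega
  · intro h
    set D := Finset.univ.filter fun i => y i ≠ x i with hD
    have hle : hammingDist x y ≤ n := by simpa using hammingDist_le_card_fintype (x := x) (y := y)
    have hc : hammingDist x y = D.card := by rw [hammingDist_comm]; rfl
    have hcc := Finset.card_compl D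
    rw [Fintype.card_fin] at hcc
    have key : ∀ A : Finset (Fin n), hammingDist y (hfiB y A) = A.card := by
      intro A; unfold hammingDist; congr 1; ext i
      simp only [Finset.mem_filter, Finset.mem_univ, true_and]; exact hfiB_ne y A i
    rcases le_total D.card (2 * q + 1) with hw | hw
    · obtain ⟨A, hA, -, hA'⟩ := Finset.exists_subsuperset_card_eq (Finset.subset_univ D) hw
        (by rw [Finset.card_univ, Fintype.card_fin]; omega)
      have h1 := h (hfiB y A) (by rw [key, hA'])
      obtain ⟨e1, e2⟩ := hfi_split y x (hfiB y A)
      rw [← hD] at e1 e2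
      have f1 : (D.filter fun i => y i ≠ hfiB y A i) = D := by
        ext i
        have := @hA i
        simp only [Finset.mem_filter, hfiB_ne]
        tauto
      rw [key, hA', f1] at e1
      rw [f1] at e2
      omega
    · obtain ⟨A, hA, hA'⟩ := Finset.exists_subset_card_eq hw
      have h1 := h (hfiB y A) (by rw [key, hA'])
      obtain ⟨e1, e2⟩ := hfi_split y x (hfiB y A)
      rw [← hD] at e1 e2
      have f1 : (D.filter fun i => y i ≠ hfiB y A i) = A := by
        ext i
        have := @hA i
        simp only [Finset.mem_filter, hfiB_ne]
        tauto
      rw [key, hA', f1] at e1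
      rw [f1] at e2
      omega

/-- distance `m` is reflected by `φ`. -/
theorem hfi_reflect {n m : ℕ} (φ : (Fin n → ZMod 2) → Fin n → ZMod 2)
    (hbij : Function.Bijective φ)
    (h : ∀ x y, hammingDist x y = m → hammingDist (φ x) (φ y) = m) (x y : Fin n → ZMod 2) :
    hammingDist (φ x) (φ y) = m ↔ hammingDist x y = m := by
  refine ⟨fun hxy => ?_, h x y⟩
  let T := {p : (Fin n → ZMod 2) × (Fin n → ZMod 2) // hammingDist p.1 p.2 = m}
  let F : T → T := fun p => ⟨(φ p.1.1, φ p.1.2), h _ _ p.2⟩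
  have hF : Function.Injective F := by
    rintro ⟨⟨a, b⟩, hp⟩ ⟨⟨c, d⟩, hp'⟩ he
    have h1 : φ a = φ c := congrArg (fun p : T => p.1.1) he
    have h2 : φ b = φ d := congrArg (fun p : T => p.1.2) he
    obtain rfl := hbij.1 h1
    obtain rfl := hbij.1 h2
    rfl
  obtain ⟨⟨⟨a, b⟩, hp⟩, hp'⟩ := Finite.injective_iff_surjective.1 hF ⟨(φ x, φ y), hxy⟩
  have h1 : φ a = φ x := congrArg (fun p : T => p.1.1) hp'
  have h2 : φ b = φ y := congrArg (fun p : T => p.1.2) hp'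
  obtain rfl := hbij.1 h1
  obtain rfl := hbij.1 h2
  exact hp

theorem hfi_N_map {n m : ℕ} (φ : (Fin n → ZMod 2) → Fin n → ZMod 2)
    (hbij : Function.Bijective φ)
    (h : ∀ x y, hammingDist x y = m → hammingDist (φ x) (φ y) = m) (x y : Fin n → ZMod 2) :
    hfiN m (φ x) (φ y) = hfiN m x y := by
  symm
  unfold hfiN
  refine Finset.card_bijective φ hbij ?_
  intro z
  simp only [Finset.mem_filter, Finset.mem_univ, true_and, hfi_reflect φ hbij h]

theorem hfi_adj_map {n q : ℕ} (hnm : n = 2 * (2 * q + 1))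
    (φ : (Fin n → ZMod 2) → Fin n → ZMod 2) (hbij : Function.Bijective φ)
    (h : ∀ x y, hammingDist x y = 2 * q + 1 → hammingDist (φ x) (φ y) = 2 * q + 1)
    (x y : Fin n → ZMod 2) (hxy : hammingDist x y = 1) :
    hammingDist (φ x) (φ y) = 1 ∨ hammingDist (φ x) (φ y) + 1 = n := by
  rw [hfi_adj hnm]
  intro z hz
  obtain ⟨z, rfl⟩ := hbij.2 z
  rw [hfi_reflect φ hbij h] at hz
  rw [← hfi_E hnm, hfi_N_map φ hbij h, hfi_E hnm]
  exact (hfi_adj hnm x y).1 (Or.inl hxy) z hz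

theorem hfi_dist_one {n : ℕ} (x y : Fin n → ZMod 2) (h : hammingDist x y = 1) :
    ∃ p, x = y + Pi.single p 1 := by
  unfold hammingDist at h
  rw [Finset.card_eq_one] at h
  obtain ⟨p, hp⟩ := h
  refine ⟨p, ?_⟩
  funext i
  have : x i ≠ y i ↔ i = p := by
    have := Finset.ext_iff.1 hp i
    simpa using this
  simp only [Pi.add_apply, Pi.single_apply]
  by_cases hi : i = p
  · have h2 := this.2 hi
    rw [if_pos hi]
    revert h2
    generalize x i = a
    generalize y i = b
    revert a b; decide
  · rw [if_neg hi, add_zero]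
    by_contra hh
    exact hi (this.1 hh)

theorem hfi_dist_single {n : ℕ} (x : Fin n → ZMod 2) (p : Fin n) :
    hammingDist x (x + Pi.single p 1) = 1 := by
  unfold hammingDist
  rw [Finset.card_eq_one]
  refine ⟨p, ?_⟩
  ext i
  simp [Pi.single_apply]

theorem hfi_adj_form {n : ℕ} (x y : Fin n → ZMod 2)
    (h : hammingDist x y = 1 ∨ hammingDist x y + 1 = n) :
    ∃ p, x = y + Pi.single p 1 ∨ x = y + Pi.single p 1 + 1 := by
  rcases h with h | h
  · obtain ⟨p, hp⟩ := hfi_dist_one x y h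
    exact ⟨p, Or.inl hp⟩
  · have := hfi_dist_add_one x y
    obtain ⟨p, hp⟩ := hfi_dist_one x (y + 1) (by omega)
    exact ⟨p, Or.inr (by rw [hp]; abel)⟩

theorem hfi_dist_perm {n : ℕ} (π : Equiv.Perm (Fin n)) (x y : Fin n → ZMod 2) :
    hammingDist (fun k => x (π k)) (fun k => y (π k)) = hammingDist x y := by
  unfold hammingDist
  refine Finset.card_bijective π π.bijective ?_
  intro i; simp

theorem hfi_norm_lt {n : ℕ} (x : Fin n → ZMod 2) (i : Fin n) (hi : x i ≠ 0) :
    hammingNorm (x + Pi.single i 1) < hammingNorm x := by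
  unfold hammingNorm
  apply Finset.card_lt_card
  rw [Finset.ssubset_iff_of_subset]
  · refine ⟨i, by simpa using hi, ?_⟩
    rcases hfi_zcases (x i) with h | h
    · exact absurd h hi
    · have h2 : (1 : ZMod 2) + 1 = 0 := by decide
      simp [h, h2]
  · intro k
    simp only [Finset.mem_filter, Finset.mem_univ, true_and, Pi.add_apply, Pi.single_apply]
    by_cases hk : k = i
    · subst hk; intro _; exact hi
    · simp [hk]

/-- equality up to complement -/
def hfiR {n : ℕ} (x y : Fin n → ZMod 2) : Prop := ∃ ε : ZMod 2, ∀ k, x k = y k + ε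

theorem hfiR_iff {n : ℕ} (x y : Fin n → ZMod 2) : hfiR x y ↔ (x = y ∨ x = y + 1) := by
  constructor
  · rintro ⟨ε, h⟩
    rcases hfi_zcases ε with rfl | rfl
    · left; funext k; rw [h k, add_zero]
    · right; funext k; rw [h k]; rfl
  · rintro (rfl | rfl)
    · exact ⟨0, fun k => (add_zero _).symm⟩
    · exact ⟨1, fun k => rfl⟩

theorem hfi_exists_out {n : ℕ} (hn : 5 ≤ n) (a b c d : Fin n) :
    ∃ k, k ≠ a ∧ k ≠ b ∧ k ≠ c ∧ k ≠ d := by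
  have h : ({a, b, c, d} : Finset (Fin n)).card < (Finset.univ : Finset (Fin n)).card := by
    rw [Finset.card_univ, Fintype.card_fin]
    exact lt_of_le_of_lt Finset.card_le_four (by omega)
  obtain ⟨k, -, hk⟩ := Finset.exists_mem_notMem_of_card_lt_card h
  exact ⟨k, by simpa using hk⟩

theorem hfi_four {n : ℕ} (hn : 5 ≤ n) (s t p q : Fin n) (hst : s ≠ t) (δ : ZMod 2)
    (h : ∀ k, (if k = s then (1 : ZMod 2) else 0) + (if k = t then 1 else 0) +
      (if k = p then 1 else 0) + (if k = q then 1 else 0) = δ) : p = s ∨ p = t := by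
  obtain ⟨k, h1, h2, h3, h4⟩ := hfi_exists_out hn s t p q
  have h0 := h k
  simp only [h1, h2, h3, h4, if_false, add_zero] at h0
  subst h0
  by_contra hc
  push Not at hc
  obtain ⟨c1, c2⟩ := hc
  have hp := h p
  have hs := h s
  simp only [c1, c2, c1.symm, hst, if_true, if_false, add_zero, zero_add] at hp hs
  by_cases hpq : p = q
  · subst hpq
    simp [c1.symm] at hs
  · simp [hpq] at hp

theorem hfi_main {n : ℕ} (hn : 5 ≤ n) (φ : (Fin n → ZMod 2) → Fin n → ZMod 2)
    (hinj : Function.Injective φ) (hadd : ∀ x, φ (x + 1) = φ x + 1)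
    (h0 : hfiR (φ 0) 0)
    (hadj : ∀ x p, ∃ r, ∃ ε : ZMod 2, ∀ k,
      φ x k = φ (x + Pi.single p 1) k + (if k = r then 1 else 0) + ε) :
    ∃ π : Equiv.Perm (Fin n), ∀ c, hfiR (φ c) (fun k => c (π k)) := by
  have hRinj : ∀ x y, hfiR (φ x) (φ y) → hfiR x y := by
    intro x y hxy
    rw [hfiR_iff] at hxy ⊢
    rw [← hadd] at hxy
    exact hxy.imp (fun h => hinj h) (fun h => hinj h)
  have hz : ∀ a : ZMod 2, a + a = 0 := by decide
  have htr : ∀ x y z : Fin n → ZMod 2, hfiR x z → hfiR y z → hfiR x y := by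
    rintro x y z ⟨e, he⟩ ⟨f, hf⟩
    refine ⟨e + f, fun k => ?_⟩
    rw [he, hf]
    linear_combination - hz f
  have hsym : ∀ x y : Fin n → ZMod 2, hfiR x y → hfiR y x := by
    intro x y h
    exact htr y x y ⟨0, fun k => (add_zero _).symm⟩ h
  -- the permutation
  have hσ : ∀ i, ∃ r : Fin n, hfiR (φ (Pi.single i 1)) (Pi.single r 1) := by
    intro i
    obtain ⟨r, ε, h⟩ := hadj 0 i
    obtain ⟨ε', h'⟩ := h0
    refine ⟨r, ε + ε', fun k => ?_⟩
    have := h k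
    rw [h' k, zero_add] at this
    simp only [Pi.single_apply, Pi.zero_apply] at this ⊢
    linear_combination - this - hz (if k = r then 1 else 0) - hz ε
  choose σ hσ using hσ
  have hσinj : Function.Injective σ := by
    intro i j hij
    have h1 : hfiR (Pi.single i 1 : Fin n → ZMod 2) (Pi.single j 1) := by
      apply hRinj
      have := hσ j
      rw [← hij] at this
      exact htr _ _ _ (hσ i) this
    obtain ⟨ε, h1⟩ := h1
    obtain ⟨k, k1, k2, -⟩ := hfi_exists_out hn i j i j
    have hk := h1 k
    simp only [Pi.single_apply, k1, k2, if_false, zero_add] at hk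
    have hi := h1 i
    rw [← hk] at hi
    by_contra hne
    simp [Pi.single_apply, hne] at hi
  let τ : Equiv.Perm (Fin n) := Equiv.ofBijective σ (Finite.injective_iff_bijective.1 hσinj)
  have hτ : ∀ i, τ i = σ i := fun i => rfl
  have hπ : ∀ i k, (τ.symm k = i) ↔ k = σ i := by
    intro i k
    rw [← hτ, Equiv.symm_apply_eq]
  refine ⟨τ.symm, ?_⟩
  intro c
  induction hN : hammingNorm c using Nat.strong_induction_on generalizing c with
  | _ N ih =>
  subst hN
  by_cases hc0 : c = 0
  · subst hc0; exact h0
  obtain ⟨i, hi⟩ := Function.ne_iff.1 hc0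
  simp only [Pi.zero_apply] at hi
  set a : Fin n → ZMod 2 := c + Pi.single i 1 with ha
  have hca : hammingNorm a < hammingNorm c := hfi_norm_lt c i hi
  have hc1 : ∀ k, c k = a k + (if k = i then 1 else 0) := by
    intro k
    simp only [ha, Pi.add_apply, Pi.single_apply]
    linear_combination - hz (if k = i then 1 else 0)
  by_cases ha0 : a = 0
  · have : c = Pi.single i 1 := by
      funext k; rw [hc1, ha0, Pi.single_apply]; simp
    rw [this]
    obtain ⟨ε, he⟩ := hσ i
    refine ⟨ε, fun k => ?_⟩
    rw [he k]
    simp only [Pi.single_apply, hπ]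
  obtain ⟨j, hj⟩ := Function.ne_iff.1 ha0
  simp only [Pi.zero_apply] at hj
  have hai : a i = 0 := by
    have := hc1 i
    rw [if_pos rfl] at this
    rcases hfi_zcases (a i) with h | h
    · exact h
    · rw [h] at this; exact absurd (this.trans (hz 1)) hi
  have hij : i ≠ j := by rintro rfl; exact hj hai
  have hcj : c j ≠ 0 := by
    rw [hc1, if_neg hij.symm, add_zero]; exact hj
  set b : Fin n → ZMod 2 := c + Pi.single j 1 with hb
  have hcb : hammingNorm b < hammingNorm c := hfi_norm_lt c j hcj
  set d : Fin n → ZMod 2 := a + Pi.single j 1 with hd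
  have hcd : hammingNorm d < hammingNorm c := (hfi_norm_lt a j hj).trans hca
  obtain ⟨εa, iha⟩ := ih _ hca a rfl
  obtain ⟨εb, ihb⟩ := ih _ hcb b rfl
  have ihd := ih _ hcd d rfl
  obtain ⟨p, εp, hp⟩ := hadj c i
  obtain ⟨q, εq, hq⟩ := hadj c j
  rw [← ha] at hp
  rw [← hb] at hq
  have hfour := hfi_four hn (σ i) (σ j) p q (fun h => hij (hσinj h)) (εa + εb + εp + εq) (by
    intro k
    have e1 := hp k
    have e2 := hq k
    rw [iha k] at e1
    rw [ihb k] at e2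
    simp only [ha, hb, Pi.add_apply, Pi.single_apply, hπ] at e1 e2
    have := hz (if k = σ j then 1 else 0)
    have := hz (if k = q then 1 else 0)
    linear_combination e2 - e1 + hz (if k = σ j then 1 else 0) + hz (if k = q then 1 else 0) - hz εa - hz εp)
  rcases hfour with rfl | rfl
  · refine ⟨εa + εp, fun k => ?_⟩
    rw [hp k, iha k]
    simp only [ha, Pi.add_apply, Pi.single_apply, hπ]
    linear_combination hz (if k = σ i then 1 else 0)
  · exfalso
    have h1 : hfiR (φ c) (fun k => d (τ.symm k)) := by
      refine ⟨εa + εp, fun k => ?_⟩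
      rw [hp k, iha k]
      simp only [hd, Pi.add_apply, Pi.single_apply, hπ]
      ring
    have h2 := hRinj _ _ (htr _ _ _ h1 ihd)
    obtain ⟨ε, h2⟩ := h2
    obtain ⟨k, k1, k2, -⟩ := hfi_exists_out hn i j i j
    have hk := h2 k
    have hi' := h2 i
    simp only [hd, ha, Pi.add_apply, Pi.single_apply, k1, k2, hij, if_false, if_true,
      add_zero] at hk hi'
    rw [left_eq_add] at hk
    subst hk
    simp at hi'

theorem hfi_fwd {n q : ℕ} (hnm : n = 2 * (2 * q + 1))
    (φ : (Fin n → ZMod 2) → Fin n → ZMod 2) (hbij : Function.Bijective φ)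
    (hadd : ∀ x, φ (x + 1) = φ x + 1) (h0 : hfiR (φ 0) 0)
    (h : ∀ x y, hammingDist x y = 2 * q + 1 → hammingDist (φ x) (φ y) = 2 * q + 1) :
    ∃ π : Equiv.Perm (Fin n), ∀ c, hfiR (φ c) (fun k => c (π k)) := by
  by_cases hn : 5 ≤ n
  · refine hfi_main hn φ hbij.1 hadd h0 ?_
    intro x p
    obtain ⟨r, hr⟩ := hfi_adj_form _ _
      (hfi_adj_map hnm φ hbij h x (x + Pi.single p 1) (hfi_dist_single x p))
    refine ⟨r, ?_⟩
    rcases hr with hr | hr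
    · refine ⟨0, fun k => ?_⟩
      rw [hr]; simp [Pi.single_apply]
    · refine ⟨1, fun k => ?_⟩
      rw [hr]; simp [Pi.single_apply]
  · obtain rfl : n = 2 := by omega
    refine ⟨1, ?_⟩
    intro c
    rw [hfiR_iff] at h0 ⊢
    simp only [Equiv.Perm.coe_one, id]
    have h1 := hadd 0
    by_cases hc : c = 0 ∨ c = 1
    · rcases hc with rfl | rfl
      · exact h0
      · rw [zero_add] at h1
        rw [h1]
        rcases h0 with h0 | h0
        · left; rw [h0, zero_add]
        · right; rw [h0, zero_add]
    · have hd : ¬ (φ c = 0 ∨ φ c = 1) := by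
        intro hh
        apply hc
        have e2 : (0 : Fin 2 → ZMod 2) + 1 + 1 = 0 := hfi_one_add_one _
        rw [zero_add] at h1 e2 h0
        rcases hh with hh | hh <;> rcases h0 with h0 | h0
        · left; exact hbij.1 (hh.trans h0.symm)
        · right; apply hbij.1; rw [hh, h1, h0, e2]
        · right; apply hbij.1; rw [hh, h1, h0, zero_add]
        · left; exact hbij.1 (hh.trans h0.symm)
      revert hc hd
      generalize φ c = e
      revert c e
      decide

theorem hfi_X {n m : ℕ} (hnm : n = 2 * m) (i : Fin n) (c : Fin n → ZMod 2) :
    (hammingNorm c < m ∨ (hammingNorm c = m ∧ c i = 0)) ∨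
    (hammingNorm (c + 1) < m ∨ (hammingNorm (c + 1) = m ∧ (c + 1) i = 0)) := by
  have h := hfi_dist_add_one 0 c
  rw [hammingDist_zero_left] at h
  try rw [hammingDist_zero_left] at h
  rcases lt_trichotomy (hammingNorm c) m with hl | hl | hl
  · exact Or.inl (Or.inl hl)
  · rcases hfi_zcases (c i) with hi | hi
    · exact Or.inl (Or.inr ⟨hl, hi⟩)
    · refine Or.inr (Or.inr ⟨by omega, ?_⟩)
      rw [Pi.add_apply, hi, Pi.one_apply]; decide
  · exact Or.inr (Or.inl (by omega))

/-- For `n ≡ 2 (mod 4)`, a bijection of the Boolean cube `C_n` stabilizing `{0̄, 1̄}` is an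
`{n/2, n}`-isometry if and only if there are a coordinate permutation `π` and a subset `S`
of `X` (the words of weight `< n/2` together with those of weight `n/2` whose first
coordinate is `0`) such that `φ c = π c` when `{c, c+1̄}` misses `S` and `φ c = π c + 1̄`
when `{c, c+1̄}` meets `S`. -/
theorem halfIsometry_classification_of_two_mod_four (n : ℕ) (hn : n % 4 = 2)
    (φ : (Fin n → ZMod 2) → Fin n → ZMod 2) (hbij : Function.Bijective φ)
    (hstab : φ '' {0, 1} = {0, 1}) :
    (∀ x y, (hammingDist x y = n / 2 ∨ hammingDist x y = n) →
      hammingDist (φ x) (φ y) = hammingDist x y) ↔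
    (∃ (π : Equiv.Perm (Fin n)) (S : Set (Fin n → ZMod 2)),
      S ⊆ {c | hammingNorm c < n / 2 ∨
        (hammingNorm c = n / 2 ∧ c ⟨0, by omega⟩ = 0)} ∧
      ∀ c, (({c, c + 1} : Set (Fin n → ZMod 2)) ∩ S = ∅ →
              φ c = fun k => c (π k)) ∧
        (({c, c + 1} : Set (Fin n → ZMod 2)) ∩ S ≠ ∅ →
              φ c = (fun k => c (π k)) + 1)) := by

  obtain ⟨q, hnm⟩ : ∃ q, n = 2 * (2 * q + 1) := ⟨n / 4, by omega⟩
  have hm : n / 2 = 2 * q + 1 := by omega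
  have hne1 : ∀ x : Fin n → ZMod 2, x ≠ x + 1 := by
    intro x hx
    have := congrFun hx ⟨0, by omega⟩
    simp at this
  constructor
  · intro h
    have hadd : ∀ x, φ (x + 1) = φ x + 1 := by
      intro x
      apply hfi_dist_n
      have h1 : hammingDist x (x + 1) = n := by
        have := hfi_dist_add_one x x
        rwa [hammingDist_self, add_zero] at this
      rw [h _ _ (Or.inr h1), h1]
    have h0 : hfiR (φ 0) 0 := by
      rw [hfiR_iff, zero_add]
      have : φ 0 ∈ φ '' {0, 1} := ⟨0, by simp, rfl⟩
      rw [hstab] at this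
      simpa using this
    obtain ⟨π, hπ⟩ := hfi_fwd hnm φ hbij hadd h0 (by
      intro x y hxy
      rw [h x y (Or.inl (by omega)), hxy])
    have key : ∀ c, φ c = (fun k => c (π k)) + 1 →
        φ (c + 1) = (fun k => (c + 1) (π k)) + 1 := by
      intro c hc
      rw [hadd, hc]; rfl
    refine ⟨π, {c | (hammingNorm c < n / 2 ∨ (hammingNorm c = n / 2 ∧ c ⟨0, by omega⟩ = 0)) ∧
      φ c = (fun k => c (π k)) + 1}, fun c hc => hc.1, ?_⟩
    intro c
    constructor
    · intro he
      rcases (hfiR_iff _ _).1 (hπ c) with h1 | h1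
      · exact h1
      · exfalso
        rcases hfi_X (m := n / 2) (by omega) ⟨0, by omega⟩ c with hx | hx
        · have : c ∈ (∅ : Set (Fin n → ZMod 2)) := by
            rw [← he]; exact ⟨Or.inl rfl, hx, h1⟩
          exact this
        · have : c + 1 ∈ (∅ : Set (Fin n → ZMod 2)) := by
            rw [← he]; exact ⟨Or.inr rfl, hx, key c h1⟩
          exact this
    · intro he
      obtain ⟨s, hs, -, hs2⟩ := Set.nonempty_iff_ne_empty.2 he
      rcases hs with rfl | hs
      · exact hs2
      · have hs : s = c + 1 := hs
        subst hs
        have := key _ hs2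
        rwa [hfi_one_add_one] at this
  · rintro ⟨π, S, -, hS⟩ x y hxy
    have hR : ∀ c, φ c = (fun k => c (π k)) ∨ φ c = (fun k => c (π k)) + 1 := by
      intro c
      by_cases hc : ({c, c + 1} : Set (Fin n → ZMod 2)) ∩ S = ∅
      · exact Or.inl ((hS c).1 hc)
      · exact Or.inr ((hS c).2 hc)
    rcases hxy with hxy | hxy
    · have h1 := hfi_dist_perm π x y
      have h2 := hfi_dist_add_one (fun k => x (π k)) (fun k => y (π k))
      have h3 := hfi_dist_add_one (fun k => y (π k)) (fun k => x (π k))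
      have h4 := hfi_dist_add_one ((fun k => x (π k)) + 1) (fun k => y (π k))
      rw [hammingDist_comm (fun k => y (π k))] at h3
      rw [hammingDist_comm (fun k => y (π k))] at h3
      rcases hR x with hx | hx <;> rcases hR y with hy | hy <;> rw [hx, hy] <;> omega
    · have hy := hfi_dist_n x y hxy
      subst hy
      have hadd : φ (x + 1) = φ x + 1 := by
        have hset : ({x + 1, x + 1 + 1} : Set (Fin n → ZMod 2)) = {x, x + 1} := by
          rw [hfi_one_add_one, Set.pair_comm]
        have hx' := hS (x + 1)
        rw [hset] at hx'
        by_cases hc : ({x, x + 1} : Set (Fin n → ZMod 2)) ∩ S = ∅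
        · rw [hx'.1 hc, (hS x).1 hc]; rfl
        · rw [hx'.2 hc, (hS x).2 hc]; rfl
      rw [hadd, hxy]
      have := hfi_dist_add_one (φ x) (φ x)
      rwa [hammingDist_self, add_zero] at this
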